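/- Let μ ≤_cd ν be probability measures on ℝ with finite first moments. Let Γ ⊆ ℝ² and M ⊆ ℝ be Borel sets such that the pair (Γ,M) is nondegenerate, first-order right-monotone, and second-order left-monotone. If P ∈ S(μ,ν) is concentrated on Γ and P|_{M×ℝ} is a martingale, then P equals the Increasing Supermartingale Transport; that is, for every x ∈ ℝ the second marginal of the restriction P|_{(−∞,x]×ℝ} equals the shadow S^ν(μ|_{(−∞,x]}). -/

import Mathlib

/-!
Fix `x`, let `θ` be the second marginal of `P` restricted to `(-∞, x] × ℝ`, and let `Y` be the
closure of the set of all `y` with `(x₂, y) ∈ Γ` for some `x₂ > x`.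

The convex-decreasing order between measures of equal mass with finite first moment is detected
by put functions (`cdOrder_of_put`): a convex nonincreasing function is a limit of functions
`c + ∑ aᵢ (tᵢ - ·)⁺` with `aᵢ ≥ 0`, obtained by interpolation on finer and finer grids.

The geometric hypotheses enter only through `exact_on_target`: for `b ∈ Y` and `(x₁, y₁) ∈ Γ` with
`x₁ ≤ x`, the function `(b - ·)⁺` is affine between `x₁` and `y₁`, and even vanishes at both points
when `x₁ ∉ M`. Since `P` is a martingale on `M`, the put functions of `θ` and of `μ|_{(-∞,x]}`
agree on `Y` (`put_eq_of_mem`).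

Let `θ'` be a competitor. Then `put θ b = put μ|_{(-∞,x]} b ≤ put θ' b` for `b ∈ Y`. For arbitrary
`t`, the function `(t - ·)⁺` is dominated by some `ψ`, a convex combination of puts with strikes in
`Y` (plus a constant if `t` lies to the right of `Y`), with equality on `Y`. As `ν - θ` is carried
by `Y` and `θ' ≤ ν`, one has `∫ (ψ - (t - ·)⁺) dθ' ≤ ∫ (ψ - (t - ·)⁺) dθ`, whence
`put θ t ≤ put θ' t` (`put_le_of_dominating`).
-/

open MeasureTheory Set
open scoped ENNReal

noncomputable section

/-- A finite Borel measure on ℝ with finite first moment. -/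
def FiniteFirstMoment (μ : Measure ℝ) : Prop :=
  IsFiniteMeasure μ ∧ Integrable (fun x : ℝ => x) μ

/-- Linear growth of a real function. -/
def LinearGrowth (φ : ℝ → ℝ) : Prop :=
  ∃ C : ℝ, ∀ x : ℝ, |φ x| ≤ C * (1 + |x|)

/-- Convex-decreasing (second stochastic) order `μ ≤_cd ν`. -/
def CDOrder (μ ν : Measure ℝ) : Prop :=
  ∀ φ : ℝ → ℝ, ConvexOn ℝ Set.univ φ → Antitone φ → LinearGrowth φ →
    ∫ x, φ x ∂μ ≤ ∫ x, φ x ∂ν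

/-- Positive-convex-decreasing order `μ ≤_pcd ν`. -/
def PCDOrder (μ ν : Measure ℝ) : Prop :=
  ∀ φ : ℝ → ℝ, ConvexOn ℝ Set.univ φ → Antitone φ → (∀ x : ℝ, 0 ≤ φ x) →
    LinearGrowth φ → ∫ x, φ x ∂μ ≤ ∫ x, φ x ∂ν

/-- Convex order `μ ≤_c ν`. -/
def COrder (μ ν : Measure ℝ) : Prop :=
  ∀ φ : ℝ → ℝ, ConvexOn ℝ Set.univ φ → LinearGrowth φ →
    ∫ x, φ x ∂μ ≤ ∫ x, φ x ∂ν

/-- `P` is a coupling of `μ` and `ν`. -/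
def IsCoupling (P : Measure (ℝ × ℝ)) (μ ν : Measure ℝ) : Prop :=
  P.map Prod.fst = μ ∧ P.map Prod.snd = ν

/-- The supermartingale property of a measure on `ℝ × ℝ`. -/
def SupermartingaleProperty (P : Measure (ℝ × ℝ)) : Prop :=
  ∀ A : Set ℝ, MeasurableSet A →
    ∫ p in A ×ˢ (Set.univ : Set ℝ), p.2 ∂P ≤ ∫ p in A ×ˢ (Set.univ : Set ℝ), p.1 ∂P

/-- `P ∈ S(μ,ν)`: supermartingale coupling. -/
def IsSupermartingaleCoupling (P : Measure (ℝ × ℝ)) (μ ν : Measure ℝ) : Prop :=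
  IsCoupling P μ ν ∧ SupermartingaleProperty P

/-- `P|_{M×ℝ}` is a martingale. -/
def MartingaleOn (P : Measure (ℝ × ℝ)) (M : Set ℝ) : Prop :=
  ∀ A : Set ℝ, MeasurableSet A → A ⊆ M →
    ∫ p in A ×ˢ (Set.univ : Set ℝ), p.2 ∂P = ∫ p in A ×ˢ (Set.univ : Set ℝ), p.1 ∂P

/-- `P ∈ M(μ,ν)`: martingale coupling. -/
def IsMartingaleCoupling (P : Measure (ℝ × ℝ)) (μ ν : Measure ℝ) : Prop :=
  IsCoupling P μ ν ∧ MartingaleOn P Set.univ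

/-- `θ` is the shadow `S^ν(μ)` of `μ` in `ν`. -/
def IsShadow (μ ν θ : Measure ℝ) : Prop :=
  FiniteFirstMoment θ ∧ CDOrder μ θ ∧ θ ≤ ν ∧
  ∀ θ' : Measure ℝ, FiniteFirstMoment θ' → CDOrder μ θ' → θ' ≤ ν → CDOrder θ θ'

/-- `P` is the Increasing Supermartingale Transport from `μ` to `ν`. -/
def IsIncreasingSMT (μ ν : Measure ℝ) (P : Measure (ℝ × ℝ)) : Prop :=
  IsSupermartingaleCoupling P μ ν ∧
  ∀ x : ℝ, ∃ θ : Measure ℝ, IsShadow (μ.restrict (Set.Iic x)) ν θ ∧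
    ∀ A : Set ℝ, MeasurableSet A → P (Set.Iic x ×ˢ A) = θ A

/-- `P` is the Decreasing Supermartingale Transport from `μ` to `ν`. -/
def IsDecreasingSMT (μ ν : Measure ℝ) (P : Measure (ℝ × ℝ)) : Prop :=
  IsSupermartingaleCoupling P μ ν ∧
  ∀ x : ℝ, ∃ θ : Measure ℝ, IsShadow (μ.restrict (Set.Ici x)) ν θ ∧
    ∀ A : Set ℝ, MeasurableSet A → P (Set.Ici x ×ˢ A) = θ A

/-- Relaxed supermartingale Spence–Mirrlees property. -/
def RelaxedSupermartingaleSM (f : ℝ × ℝ → ℝ) : Prop :=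
  ∀ x₁ x₂ : ℝ, x₁ < x₂ →
    Antitone (fun y : ℝ => f (x₂, y) - f (x₁, y)) ∧
    ConvexOn ℝ Set.univ (fun y : ℝ => f (x₂, y) - f (x₁, y))

/-- (Strict) supermartingale Spence–Mirrlees property. -/
def SupermartingaleSM (f : ℝ × ℝ → ℝ) : Prop :=
  ∀ x₁ x₂ : ℝ, x₁ < x₂ →
    StrictAnti (fun y : ℝ => f (x₂, y) - f (x₁, y)) ∧
    StrictConvexOn ℝ Set.univ (fun y : ℝ => f (x₂, y) - f (x₁, y))

/-- `f⁺` is `S(μ,ν)`-uniformly integrable. -/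
def PosPartUnifInt (μ ν : Measure ℝ) (f : ℝ × ℝ → ℝ) : Prop :=
  ∀ ε : ℝ, 0 < ε → ∃ N : ℝ, ∀ P : Measure (ℝ × ℝ),
    IsSupermartingaleCoupling P μ ν →
      ∫ p in {p : ℝ × ℝ | N < max (f p) 0}, max (f p) 0 ∂P ≤ ε

/-- First-order left monotonicity of `(Γ, M)`. -/
def FirstOrderLeftMonotone (Γ : Set (ℝ × ℝ)) (M : Set ℝ) : Prop :=
  ∀ x₁ y₁ x₂ y₂ : ℝ, (x₁, y₁) ∈ Γ → (x₂, y₂) ∈ Γ → x₁ < x₂ → x₂ ∉ M → y₁ ≤ y₂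

/-- First-order right monotonicity of `(Γ, M)`. -/
def FirstOrderRightMonotone (Γ : Set (ℝ × ℝ)) (M : Set ℝ) : Prop :=
  ∀ x₁ y₁ x₂ y₂ : ℝ, (x₁, y₁) ∈ Γ → (x₂, y₂) ∈ Γ → x₁ < x₂ → x₁ ∉ M → y₂ ≤ y₁

/-- Second-order left monotonicity of `Γ`. -/
def SecondOrderLeftMonotone (Γ : Set (ℝ × ℝ)) : Prop :=
  ∀ x y₁ y₂ x' y' : ℝ, (x, y₁) ∈ Γ → (x, y₂) ∈ Γ → (x', y') ∈ Γ →
    y₁ < y₂ → x < x' → y' ∉ Set.Ioo y₁ y₂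

/-- Second-order right monotonicity of `Γ`. -/
def SecondOrderRightMonotone (Γ : Set (ℝ × ℝ)) : Prop :=
  ∀ x y₁ y₂ x' y' : ℝ, (x, y₁) ∈ Γ → (x, y₂) ∈ Γ → (x', y') ∈ Γ →
    y₁ < y₂ → x' < x → y' ∉ Set.Ioo y₁ y₂

/-- Nondegeneracy of `(Γ, M)`. -/
def Nondegenerate (Γ : Set (ℝ × ℝ)) (M : Set ℝ) : Prop :=
  (∀ x y : ℝ, (x, y) ∈ Γ → x < y → ∃ y' : ℝ, y' < x ∧ (x, y') ∈ Γ) ∧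
  (∀ x y : ℝ, x ∈ M → (x, y) ∈ Γ → y < x → ∃ y' : ℝ, x < y' ∧ (x, y') ∈ Γ)

/-- The put function `p_μ`. -/
def put (μ : Measure ℝ) (t : ℝ) : ℝ := ∫ s, max (t - s) 0 ∂μ

/-- `x` is a barrier for the supermartingale transports from `μ` to `ν`. -/
def IsBarrier (μ ν : Measure ℝ) (x : ℝ) : Prop :=
  ∀ P : Measure (ℝ × ℝ), IsSupermartingaleCoupling P μ ν →
    P {p : ℝ × ℝ | p.1 ≤ x ∧ x < p.2} = 0 ∧ P {p : ℝ × ℝ | x ≤ p.1 ∧ p.2 < x} = 0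

/-- Barycenter of a finite measure (with `bary 0 = 0`). -/
def bary (θ : Measure ℝ) : ℝ := (∫ t, t ∂θ) / (θ Set.univ).toReal

/-! ### Put functions and the convex-decreasing order -/

lemma integrable_put {μ : Measure ℝ} (hμ : FiniteFirstMoment μ) (t : ℝ) :
    Integrable (fun s : ℝ => max (t - s) 0) μ := by
  have := hμ.1
  exact ((integrable_const t).sub hμ.2).pos_part

lemma integrable_of_linearGrowth {μ : Measure ℝ} (hμ : FiniteFirstMoment μ) {φ : ℝ → ℝ}
    (hm : Measurable φ) (hl : LinearGrowth φ) : Integrable φ μ := by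
  have := hμ.1
  obtain ⟨C, hC⟩ := hl
  refine Integrable.mono' (g := fun x => C * (1 + |x|)) ?_ hm.aestronglyMeasurable
    (Filter.Eventually.of_forall fun x => by simpa using hC x)
  exact ((integrable_const (1 : ℝ)).add hμ.2.abs).const_mul C

/-- Piecewise linear interpolation of `φ` at the grid points `t₀ - jδ`, `j ≤ k`, constant to the
right of `t₀` and continued linearly to the left of `t₀ - kδ`. Each new grid point adds a
nonnegative multiple of a put, so the integral inequality between `μ` and `ν` is preserved. -/
lemma exists_interpolation {μ ν : Measure ℝ} (hμ : FiniteFirstMoment μ) (hν : FiniteFirstMoment ν)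
    (hmass : μ Set.univ = ν Set.univ) (hput : ∀ t, put μ t ≤ put ν t)
    {φ : ℝ → ℝ} (hc : ConvexOn ℝ Set.univ φ) (ha : Antitone φ) (t₀ δ : ℝ) (hδ : 0 < δ) (k : ℕ) :
    ∃ f : ℝ → ℝ, Integrable f μ ∧ Integrable f ν ∧ ∫ x, f x ∂μ ≤ ∫ x, f x ∂ν ∧
      (∀ x, t₀ ≤ x → f x = φ t₀) ∧
      (∀ x, t₀ - k * δ ≤ x → x ≤ t₀ → φ x ≤ f x ∧ f x ≤ φ (x - δ)) ∧
      ∃ D : ℝ, 0 ≤ D ∧ ∀ x, x ≤ t₀ - k * δ →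
        f x = φ (t₀ - k * δ) + D * (t₀ - k * δ - x) ∧ f x ≤ φ x := by
  have := hμ.1
  have := hν.1
  induction k with
  | zero =>
    refine ⟨fun _ => φ t₀, integrable_const _, integrable_const _, ?_, fun _ _ => rfl, ?_, 0,
      le_rfl, ?_⟩
    · simp [Measure.real, hmass]
    · intro x h h'
      have : x = t₀ := by simp at h; linarith
      subst this
      exact ⟨le_rfl, ha (by linarith)⟩
    · intro x h
      simp at h ⊢
      exact ha h
  | succ k ih =>
    obtain ⟨f, hfμ, hfν, hle, hr, hm, D, hD, hl⟩ := ih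
    set T := t₀ - k * δ with hT
    have hT' : t₀ - ((k + 1 : ℕ) : ℝ) * δ = T - δ := by push_cast; rw [hT]; ring
    rw [hT']
    set D' := (φ (T - δ) - φ T) / δ with hD'
    have hD'δ : D' * δ = φ (T - δ) - φ T := by rw [hD']; field_simp
    have hDD : D ≤ D' := by
      have := hl (T - δ) (by linarith)
      rw [hD', le_div_iff₀ hδ]
      have h1 := this.1
      have h2 := this.2
      rw [h1] at h2
      linarith [show D * (T - (T - δ)) = D * δ by ring]
    have hT0 : T ≤ t₀ := by
      have : 0 ≤ (k : ℝ) * δ := by positivity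
      linarith
    have hleft : ∀ x, x ≤ T → f x + (D' - D) * max (T - x) 0 = φ T + D' * (T - x) := by
      intro x hx
      rw [(hl x hx).1, max_eq_left (by linarith)]
      ring
    have hright : ∀ x, T ≤ x → f x + (D' - D) * max (T - x) 0 = f x := by
      intro x hx
      rw [max_eq_right (by linarith)]
      ring
    refine ⟨fun x => f x + (D' - D) * max (T - x) 0, hfμ.add ((integrable_put hμ T).const_mul _),
      hfν.add ((integrable_put hν T).const_mul _), ?_, ?_, ?_, D', hD.trans hDD, ?_⟩
    · rw [integral_add hfμ ((integrable_put hμ T).const_mul _),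
        integral_add hfν ((integrable_put hν T).const_mul _), integral_const_mul,
        integral_const_mul]
      exact add_le_add hle (mul_le_mul_of_nonneg_left (hput T) (by linarith))
    · intro x hx
      simp only
      rw [hright x (hT0.trans hx), hr x hx]
    · intro x hx hx'
      simp only
      rcases le_total T x with h | h
      · rw [hright x h]
        exact hm x h hx'
      · rw [hleft x h]
        constructor
        · have hw : ((T - x) / δ) • (T - δ) + (1 - (T - x) / δ) • T = x := by
            simp only [smul_eq_mul]; field_simp; ring
          have := hc.2 (mem_univ (T - δ)) (mem_univ T)
            (div_nonneg (by linarith) hδ.le : 0 ≤ (T - x) / δ)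
            (by rw [sub_nonneg, div_le_one hδ]; linarith : 0 ≤ 1 - (T - x) / δ) (by ring)
          rw [hw] at this
          refine this.trans (le_of_eq ?_)
          simp only [smul_eq_mul, hD']
          field_simp
          ring
        · calc φ T + D' * (T - x) ≤ φ T + D' * δ := by
                have := mul_le_mul_of_nonneg_left (show T - x ≤ δ by linarith) (hD.trans hDD)
                linarith
            _ = φ (T - δ) := by linarith
            _ ≤ φ (x - δ) := ha (by linarith)
    · intro x hx
      simp only
      rw [hleft x (by linarith)]
      constructor
      · linear_combination hD'δ
      -- the chord over `[T - δ, T]`, continued to the left, lies below `φ`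
      · rcases hx.eq_or_lt with rfl | hlt
        · linarith [show D' * (T - (T - δ)) = D' * δ by ring]
        · have := hc.slope_mono_adjacent (mem_univ x) (mem_univ T) hlt (by linarith : T - δ < T)
          rw [show T - (T - δ) = δ by ring, div_le_div_iff₀ (by linarith) hδ] at this
          have h3 : D' * (T - x) * δ ≤ (φ x - φ T) * δ := by
            have : D' * (T - x) * δ = (φ (T - δ) - φ T) * (T - x) := by rw [← hD'δ]; ring
            nlinarith
          linarith [le_of_mul_le_mul_right h3 hδ]

lemma cdOrder_of_put {μ ν : Measure ℝ} (hμ : FiniteFirstMoment μ) (hν : FiniteFirstMoment ν)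
    (hmass : μ Set.univ = ν Set.univ) (hput : ∀ t, put μ t ≤ put ν t) : CDOrder μ ν := by
  intro φ hc ha hl
  have := hμ.1
  have := hν.1
  have hcont : Continuous φ := by
    rw [← continuousOn_univ]; exact hc.continuousOn isOpen_univ
  have key := fun n : ℕ => exists_interpolation hμ hν hmass hput hc ha ((n : ℝ) + 1)
    (1 / ((n : ℝ) + 1)) (by positivity) (2 * (n + 1) ^ 2)
  have hgrid : ∀ n : ℕ, ((n : ℝ) + 1) - ((2 * (n + 1) ^ 2 : ℕ) : ℝ) * (1 / ((n : ℝ) + 1))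
      = -((n : ℝ) + 1) := by
    intro n
    have : ((n : ℝ) + 1) ≠ 0 := by positivity
    push_cast
    field_simp
    ring
  simp only [hgrid] at key
  choose f hfμ hfν hle hr hm D hD hleft using key
  have hshift : LinearGrowth (fun x => φ (x - 1)) := by
    obtain ⟨C, hC⟩ := hl
    have hC0 : 0 ≤ C := by
      have := (abs_nonneg _).trans (hC 0)
      simpa using this
    refine ⟨2 * C, fun x => (hC _).trans ?_⟩
    have : |x - 1| ≤ |x| + 1 := by simpa using abs_sub x 1
    nlinarith [abs_nonneg x]
  have hbound : ∀ n x, ‖f n x‖ ≤ |φ x| + |φ (x - 1)| + |φ 0| := by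
    intro n x
    have hn : (0 : ℝ) < (n : ℝ) + 1 := by positivity
    have hn1 : 1 / ((n : ℝ) + 1) ≤ 1 := by
      rw [div_le_one hn]; linarith [Nat.cast_nonneg (α := ℝ) n]
    have a1 := abs_le.1 (le_refl |φ x|)
    have a2 := abs_le.1 (le_refl |φ (x - 1)|)
    have a3 := abs_le.1 (le_refl |φ 0|)
    rw [Real.norm_eq_abs, abs_le]
    rcases le_total ((n : ℝ) + 1) x with h | h
    · rw [hr n x h]
      have b1 := ha h
      have b2 := ha hn.le
      constructor <;> linarith
    · rcases le_total (-((n : ℝ) + 1)) x with h' | h'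
      · have b := hm n x h' h
        have b1 : φ (x - 1 / ((n : ℝ) + 1)) ≤ φ (x - 1) := ha (by linarith)
        constructor <;> linarith
      · have b := hleft n x h'
        have b1 : φ 0 ≤ φ (-((n : ℝ) + 1)) := ha (by linarith)
        have b2 := mul_nonneg (hD n) (by linarith : 0 ≤ -((n : ℝ) + 1) - x)
        constructor <;> linarith
  have hlim : ∀ x, Filter.Tendsto (fun n => f n x) Filter.atTop (nhds (φ x)) := by
    intro x
    have h1 : Filter.Tendsto (fun n : ℕ => φ (x - 1 / ((n : ℝ) + 1))) Filter.atTop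
        (nhds (φ x)) := by
      have := (hcont.tendsto (x - 0)).comp
        (tendsto_const_nhds.sub (tendsto_one_div_add_atTop_nhds_zero_nat (𝕜 := ℝ)))
      simpa [Function.comp_def] using this
    obtain ⟨N, hN⟩ := exists_nat_ge |x|
    have hev : ∀ᶠ n : ℕ in Filter.atTop, φ x ≤ f n x ∧ f n x ≤ φ (x - 1 / ((n : ℝ) + 1)) := by
      filter_upwards [Filter.eventually_ge_atTop N] with n hn
      have hn' : (N : ℝ) ≤ n := by exact_mod_cast hn
      have := abs_le.1 (hN.trans hn')
      exact hm n x (by linarith) (by linarith)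
    exact tendsto_of_tendsto_of_tendsto_of_le_of_le' tendsto_const_nhds h1
      (hev.mono fun _ h => h.1) (hev.mono fun _ h => h.2)
  have hdct : ∀ ρ : Measure ℝ, FiniteFirstMoment ρ → (∀ n, Integrable (f n) ρ) →
      Filter.Tendsto (fun n => ∫ x, f n x ∂ρ) Filter.atTop (nhds (∫ x, φ x ∂ρ)) := by
    intro ρ hρ hf
    have := hρ.1
    refine tendsto_integral_of_dominated_convergence (fun x => |φ x| + |φ (x - 1)| + |φ 0|)
      (fun n => (hf n).1) ?_ (fun n => Filter.Eventually.of_forall (hbound n))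
      (Filter.Eventually.of_forall hlim)
    have i1 := integrable_of_linearGrowth hρ hcont.measurable hl
    have i2 := integrable_of_linearGrowth hρ
      (hcont.comp (continuous_id.sub continuous_const)).measurable hshift
    exact (i1.abs.add i2.abs).add (integrable_const _)
  exact le_of_tendsto_of_tendsto' (hdct μ hμ hfμ) (hdct ν hν hfν) hle

lemma put_convex (t : ℝ) : ConvexOn ℝ Set.univ (fun s : ℝ => max (t - s) 0) :=
  ((convexOn_const t convex_univ).sub (concaveOn_id convex_univ)).sup
    (convexOn_const 0 convex_univ)

lemma CDOrder.put_le {μ ν : Measure ℝ} (h : CDOrder μ ν) (t : ℝ) : put μ t ≤ put ν t := by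
  refine h _ (put_convex t) (fun a b hab => max_le_max (by linarith) le_rfl) ⟨1 + |t|, fun x => ?_⟩
  rw [abs_of_nonneg (le_max_right _ _)]
  have h1 := le_abs_self t
  have h2 := neg_abs_le x
  have h3 := abs_nonneg t
  have h4 := abs_nonneg x
  exact max_le (by nlinarith) (by positivity)

lemma CDOrder.mass_eq {μ ν : Measure ℝ} (h : CDOrder μ ν) [IsFiniteMeasure μ]
    [IsFiniteMeasure ν] : μ Set.univ = ν Set.univ := by
  have lg : ∀ c : ℝ, LinearGrowth fun _ => c := fun c =>
    ⟨|c|, fun x => by nlinarith [abs_nonneg c, abs_nonneg x, mul_nonneg (abs_nonneg c) (abs_nonneg x)]⟩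
  have h1 := h (fun _ => 1) (convexOn_const _ convex_univ) antitone_const (lg _)
  have h2 := h (fun _ => -1) (convexOn_const _ convex_univ) antitone_const (lg _)
  simp [Measure.real] at h1 h2
  exact le_antisymm h1 h2

/-! ### Use of the geometric hypotheses -/

/-- The closure of the set of targets of sources strictly to the right of `x`. -/
def laterTargets (Γ : Set (ℝ × ℝ)) (x : ℝ) : Set ℝ :=
  closure {y | ∃ x₂, x < x₂ ∧ (x₂, y) ∈ Γ}

/-- The kink `b` of the put `(b - ·)⁺` never separates a source `x₁ ≤ x` from its target, so the
put is affine between the two; for `x₁ ∉ M` both lie to the right of `b`. -/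
lemma exact_on_target {Γ : Set (ℝ × ℝ)} {M : Set ℝ} (hnd : Nondegenerate Γ M)
    (h1 : FirstOrderRightMonotone Γ M) (h2 : SecondOrderLeftMonotone Γ) {x b x₁ y₁ : ℝ}
    (hb : b ∈ laterTargets Γ x) (hx : x₁ ≤ x) (h : (x₁, y₁) ∈ Γ) :
    max (b - y₁) 0 - max (b - x₁) 0 = -(M ∩ Set.Iio b).indicator (fun _ => y₁ - x₁) x₁ := by
  have hgap : ∀ u v : ℝ, (x₁, u) ∈ Γ → (x₁, v) ∈ Γ → u < b → b < v → False := by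
    intro u v hu hv hub hbv
    obtain ⟨y, hy, x₂, hx₂, hyΓ⟩ := mem_closure_iff.1 hb _ isOpen_Ioo ⟨hub, hbv⟩
    exact h2 x₁ u v x₂ y hu hv hyΓ (hub.trans hbv) (hx.trans_lt hx₂) hy
  by_cases hM : x₁ ∈ M
  · rcases lt_or_ge x₁ b with hxb | hxb
    · have hyb : y₁ ≤ b := by
        by_contra! hlt
        obtain ⟨y', hy', hΓ'⟩ := hnd.1 x₁ y₁ h (hxb.trans hlt)
        exact hgap y' y₁ hΓ' h (hy'.trans hxb) hlt
      rw [indicator_of_mem (show x₁ ∈ M ∩ Set.Iio b from ⟨hM, hxb⟩), max_eq_left (by linarith),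
        max_eq_left (by linarith)]
      ring
    · have hyb : b ≤ y₁ := by
        by_contra! hlt
        obtain ⟨y', hy', hΓ'⟩ := hnd.2 x₁ y₁ hM h (hlt.trans_le hxb)
        exact hgap y₁ y' h hΓ' hlt (hxb.trans_lt hy')
      rw [indicator_of_notMem (fun hh => not_lt.2 hxb hh.2), max_eq_right (by linarith),
        max_eq_right (by linarith)]
      ring
  · have hle : ∀ u, (x₁, u) ∈ Γ → b ≤ u := by
      intro u hu
      have : laterTargets Γ x ⊆ Set.Iic u := closure_minimal
        (fun y ⟨x₂, hx₂, hyΓ⟩ => h1 x₁ u x₂ y hu hyΓ (hx.trans_lt hx₂) hM) isClosed_Iic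
      exact this hb
    have hby := hle y₁ h
    have hbx : b ≤ x₁ := by
      rcases le_or_gt y₁ x₁ with hh | hh
      · exact hby.trans hh
      · obtain ⟨y', hy', hΓ'⟩ := hnd.1 x₁ y₁ h hh
        exact (hle y' hΓ').trans hy'.le
    rw [indicator_of_notMem (fun hh => hM hh.1), max_eq_right (by linarith),
      max_eq_right (by linarith)]
    ring

/-! ### The second marginal of the restricted coupling -/

/-- The second marginal of `P` restricted to sources in `A`. -/
def sndOn (P : Measure (ℝ × ℝ)) (A : Set ℝ) : Measure ℝ :=
  (P.restrict (A ×ˢ (Set.univ : Set ℝ))).map Prod.snd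

lemma measurableSet_strip {A : Set ℝ} (hA : MeasurableSet A) :
    MeasurableSet (A ×ˢ (Set.univ : Set ℝ)) := hA.prod MeasurableSet.univ

lemma restrict_eq_map {P : Measure (ℝ × ℝ)} {μ ν : Measure ℝ} (hP : IsCoupling P μ ν) {A : Set ℝ}
    (hA : MeasurableSet A) :
    μ.restrict A = (P.restrict (A ×ˢ (Set.univ : Set ℝ))).map Prod.fst := by
  rw [← hP.1, Measure.restrict_map measurable_fst hA, Set.prod_univ]

lemma sndOn_add_compl {P : Measure (ℝ × ℝ)} {μ ν : Measure ℝ} (hP : IsCoupling P μ ν) {A : Set ℝ}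
    (hA : MeasurableSet A) : sndOn P A + sndOn P Aᶜ = ν := by
  unfold sndOn
  rw [← Measure.map_add _ _ measurable_snd, ← hP.2]
  congr 1
  have : Aᶜ ×ˢ (Set.univ : Set ℝ) = (A ×ˢ (Set.univ : Set ℝ))ᶜ := by ext; simp
  rw [this, Measure.restrict_add_restrict_compl (measurableSet_strip hA)]

lemma FiniteFirstMoment.mono {μ ν : Measure ℝ} (hν : FiniteFirstMoment ν) (h : μ ≤ ν) :
    FiniteFirstMoment μ := by
  have := hν.1
  exact ⟨isFiniteMeasure_of_le ν h, hν.2.mono_measure h⟩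

lemma sndOn_le {P : Measure (ℝ × ℝ)} {μ ν : Measure ℝ} (hP : IsCoupling P μ ν) {A : Set ℝ}
    (hA : MeasurableSet A) : sndOn P A ≤ ν := by
  rw [← sndOn_add_compl hP hA]
  exact Measure.le_add_right le_rfl

lemma sndOn_mass {P : Measure (ℝ × ℝ)} {μ ν : Measure ℝ} (hP : IsCoupling P μ ν) {A : Set ℝ}
    (hA : MeasurableSet A) : μ.restrict A Set.univ = sndOn P A Set.univ := by
  rw [restrict_eq_map hP hA, sndOn, Measure.map_apply measurable_fst MeasurableSet.univ,
    Measure.map_apply measurable_snd MeasurableSet.univ]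
  rfl

section Coupling

variable {P : Measure (ℝ × ℝ)} {μ ν : Measure ℝ}

lemma integrable_fst_coupling (hP : IsCoupling P μ ν) {g : ℝ → ℝ}
    (hg : Integrable g μ) : Integrable (fun p : ℝ × ℝ => g p.1) P := by
  rw [← hP.1] at hg
  exact hg.comp_measurable measurable_fst

lemma integrable_snd_coupling (hP : IsCoupling P μ ν) {g : ℝ → ℝ}
    (hg : Integrable g ν) : Integrable (fun p : ℝ × ℝ => g p.2) P := by
  rw [← hP.2] at hg
  exact hg.comp_measurable measurable_snd

lemma put_sndOn_sub_put (hP : IsCoupling P μ ν) (hμ : FiniteFirstMoment μ)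
    (hν : FiniteFirstMoment ν) {A : Set ℝ} (hA : MeasurableSet A) (b : ℝ) :
    put (sndOn P A) b - put (μ.restrict A) b =
      ∫ p in A ×ˢ (Set.univ : Set ℝ), (max (b - p.2) 0 - max (b - p.1) 0) ∂P := by
  have hm : Measurable fun s : ℝ => max (b - s) 0 := by fun_prop
  unfold put
  rw [restrict_eq_map hP hA, sndOn, integral_map measurable_snd.aemeasurable
    hm.aestronglyMeasurable, integral_map measurable_fst.aemeasurable hm.aestronglyMeasurable,
    ← integral_sub]
  · exact (integrable_snd_coupling hP (integrable_put hν b)).restrict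
  · exact (integrable_fst_coupling hP (integrable_put hμ b)).restrict

/-- The increments of the coupling, switched off outside a set `B` of sources, integrate over the
sources in `A` to the increment over `A ∩ B`. -/
lemma integral_indicator_increment (hP : IsCoupling P μ ν) (hμ : FiniteFirstMoment μ)
    (hν : FiniteFirstMoment ν) (A : Set ℝ) {B : Set ℝ} (hB : MeasurableSet B) :
    ∫ p in A ×ˢ (Set.univ : Set ℝ), B.indicator (fun _ => p.2 - p.1) p.1 ∂P =
      ∫ p in (A ∩ B) ×ˢ (Set.univ : Set ℝ), p.2 ∂P -
        ∫ p in (A ∩ B) ×ˢ (Set.univ : Set ℝ), p.1 ∂P := by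
  have heq : (fun p : ℝ × ℝ => B.indicator (fun _ => p.2 - p.1) p.1) =
      (B ×ˢ (Set.univ : Set ℝ)).indicator fun p => p.2 - p.1 := by
    ext p
    by_cases h : p.1 ∈ B
    · rw [indicator_of_mem h, indicator_of_mem (by simpa using h)]
    · rw [indicator_of_notMem h, indicator_of_notMem (by simpa using h)]
  rw [heq, setIntegral_indicator (measurableSet_strip hB), Set.prod_inter_prod, Set.univ_inter,
    integral_sub]
  · exact (integrable_snd_coupling hP hν.2).restrict
  · exact (integrable_fst_coupling hP hμ.2).restrict

lemma integrable_indicator_increment (hP : IsCoupling P μ ν) (hμ : FiniteFirstMoment μ)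
    (hν : FiniteFirstMoment ν) {B : Set ℝ} (hB : MeasurableSet B) :
    Integrable (fun p : ℝ × ℝ => B.indicator (fun _ => p.2 - p.1) p.1) P := by
  have heq : (fun p : ℝ × ℝ => B.indicator (fun _ => p.2 - p.1) p.1) =
      (B ×ˢ (Set.univ : Set ℝ)).indicator fun p => p.2 - p.1 := by
    ext p
    by_cases h : p.1 ∈ B
    · rw [indicator_of_mem h, indicator_of_mem (by simpa using h)]
    · rw [indicator_of_notMem h, indicator_of_notMem (by simpa using h)]
  rw [heq]
  exact ((integrable_snd_coupling hP hν.2).sub (integrable_fst_coupling hP hμ.2)).indicator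
    (measurableSet_strip hB)

/-- Jensen's inequality for puts under the supermartingale property. -/
lemma put_le_put_sndOn (hP : IsSupermartingaleCoupling P μ ν) (hμ : FiniteFirstMoment μ)
    (hν : FiniteFirstMoment ν) {A : Set ℝ} (hA : MeasurableSet A) (b : ℝ) :
    put (μ.restrict A) b ≤ put (sndOn P A) b := by
  rw [← sub_nonneg, put_sndOn_sub_put hP.1 hμ hν hA]
  have h0 := integral_indicator_increment hP.1 hμ hν A (measurableSet_Iio (a := b))
  have h1 := hP.2 (A ∩ Set.Iio b) (hA.inter measurableSet_Iio)
  have h2 : ∫ p in A ×ˢ (Set.univ : Set ℝ), -(Set.Iio b).indicator (fun _ => p.2 - p.1) p.1 ∂P ≤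
      ∫ p in A ×ˢ (Set.univ : Set ℝ), (max (b - p.2) 0 - max (b - p.1) 0) ∂P := by
    refine integral_mono (integrable_indicator_increment hP.1 hμ hν measurableSet_Iio).neg.restrict
      ((integrable_snd_coupling hP.1 (integrable_put hν b)).sub
        (integrable_fst_coupling hP.1 (integrable_put hμ b))).restrict ?_
    intro p
    simp only
    -- subgradient inequality for the put at `p.1`
    by_cases h : p.1 < b
    · rw [indicator_of_mem (show p.1 ∈ Set.Iio b from h), max_eq_left (by linarith : 0 ≤ b - p.1)]
      linarith [le_max_left (b - p.2) 0]
    · rw [indicator_of_notMem (show p.1 ∉ Set.Iio b from h),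
        max_eq_right (by linarith : b - p.1 ≤ 0)]
      linarith [le_max_right (b - p.2) 0]
  rw [integral_neg] at h2
  linarith

lemma put_eq_of_mem (hP : IsCoupling P μ ν) (hμ : FiniteFirstMoment μ)
    (hν : FiniteFirstMoment ν) {Γ : Set (ℝ × ℝ)} {M : Set ℝ} (hM : MeasurableSet M)
    (hnd : Nondegenerate Γ M) (h1 : FirstOrderRightMonotone Γ M) (h2 : SecondOrderLeftMonotone Γ)
    (hPΓ : P Γᶜ = 0) (hPM : MartingaleOn P M) {x b : ℝ} (hb : b ∈ laterTargets Γ x) :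
    put (sndOn P (Set.Iic x)) b = put (μ.restrict (Set.Iic x)) b := by
  rw [← sub_eq_zero, put_sndOn_sub_put hP hμ hν measurableSet_Iic]
  have hB : MeasurableSet (M ∩ Set.Iio b) := hM.inter measurableSet_Iio
  have hae : ∀ᵐ p ∂P.restrict (Set.Iic x ×ˢ (Set.univ : Set ℝ)),
      max (b - p.2) 0 - max (b - p.1) 0 =
        -(M ∩ Set.Iio b).indicator (fun _ => p.2 - p.1) p.1 := by
    rw [ae_restrict_iff' (measurableSet_strip measurableSet_Iic)]
    have : ∀ᵐ p ∂P, p ∈ Γ := hPΓ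
    filter_upwards [this] with p hp hpx
    exact exact_on_target hnd h1 h2 hb hpx.1 hp
  rw [integral_congr_ae hae, integral_neg, integral_indicator_increment hP hμ hν
    _ hB, hPM _ (measurableSet_Iic.inter hB) (fun z hz => hz.2.1)]
  simp

lemma sndOn_compl_laterTargets {Γ : Set (ℝ × ℝ)} (hPΓ : P Γᶜ = 0) (x : ℝ) :
    ∀ᵐ y ∂sndOn P (Set.Iic x)ᶜ, y ∈ laterTargets Γ x := by
  have hcl : MeasurableSet (laterTargets Γ x) := isClosed_closure.measurableSet
  rw [sndOn, ae_map_iff (p := fun y => y ∈ laterTargets Γ x) measurable_snd.aemeasurable hcl,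
    ae_restrict_iff' (measurableSet_strip measurableSet_Iic.compl)]
  have : ∀ᵐ p ∂P, p ∈ Γ := hPΓ
  filter_upwards [this] with p hp hpx
  exact subset_closure ⟨p.1, by simpa using hpx, hp⟩

end Coupling

/-! ### Comparison with a competitor -/

/-- If `ν = θ + θc` with `θc` carried by `Y`, then a put is ordered as soon as it is dominated,
with equality on `Y`, by a function `ψ` whose integrals are ordered. -/
lemma put_le_of_dominating {θ θc θ' ν : Measure ℝ} (hν : FiniteFirstMoment ν) (hadd : θ + θc = ν)
    (hle : θ' ≤ ν) {Y : Set ℝ} (hY : ∀ᵐ y ∂θc, y ∈ Y) {ψ : ℝ → ℝ} {t : ℝ}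
    (hψi : Integrable ψ ν) (hdom : ∀ y, max (t - y) 0 ≤ ψ y) (heq : ∀ y ∈ Y, ψ y = max (t - y) 0)
    (hψ : ∫ y, ψ y ∂θ ≤ ∫ y, ψ y ∂θ') : put θ t ≤ put θ' t := by
  have hθν : θ ≤ ν := by rw [← hadd]; exact Measure.le_add_right le_rfl
  have hcν : θc ≤ ν := by rw [← hadd]; exact Measure.le_add_left le_rfl
  have hi := integrable_put hν t
  have hg : Integrable (fun y => ψ y - max (t - y) 0) ν := hψi.sub hi
  have e1 : ∫ y, (ψ y - max (t - y) 0) ∂θ' ≤ ∫ y, (ψ y - max (t - y) 0) ∂ν :=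
    integral_mono_measure hle
      (Filter.Eventually.of_forall fun y => sub_nonneg.2 (hdom y)) hg
  have e2 : ∫ y, (ψ y - max (t - y) 0) ∂θc = 0 :=
    integral_eq_zero_of_ae (hY.mono fun y hy => by simp [heq y hy])
  rw [← hadd, integral_add_measure (hg.mono_measure hθν) (hg.mono_measure hcν), e2, add_zero,
    integral_sub (hψi.mono_measure hθν) (hi.mono_measure hθν),
    integral_sub (hψi.mono_measure hle) (hi.mono_measure hle)] at e1
  unfold put
  linarith

/-- Puts ordered at all strikes of a nonempty closed set carrying `ν - θ` are ordered at every
strike. -/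
lemma put_le_of_put_le_on {θ θc θ' ν : Measure ℝ} (hν : FiniteFirstMoment ν) (hadd : θ + θc = ν)
    (hle : θ' ≤ ν) (hmass : θ Set.univ = θ' Set.univ) {Y : Set ℝ} (hYc : IsClosed Y)
    (hYne : Y.Nonempty) (hY : ∀ᵐ y ∂θc, y ∈ Y)
    (hput : ∀ b ∈ Y, put θ b ≤ put θ' b) (t : ℝ) : put θ t ≤ put θ' t := by
  have hθν : θ ≤ ν := by rw [← hadd]; exact Measure.le_add_right le_rfl
  have hθ := hν.mono hθν
  have hθ' := hν.mono hle
  have := hν.1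
  have := hθ.1
  have := hθ'.1
  have hα : (Y ∩ Set.Iic t).Nonempty → ∃ α ∈ Y, α ≤ t ∧ ∀ y ∈ Y, y ≤ t → y ≤ α := by
    intro hne
    have hbd : BddAbove (Y ∩ Set.Iic t) := ⟨t, fun y hy => hy.2⟩
    have hmem := (hYc.inter isClosed_Iic).csSup_mem hne hbd
    exact ⟨_, hmem.1, hmem.2, fun y hy hyt => le_csSup hbd ⟨hy, hyt⟩⟩
  have hβ : (Y ∩ Set.Ici t).Nonempty → ∃ β ∈ Y, t ≤ β ∧ ∀ y ∈ Y, t ≤ y → β ≤ y := by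
    intro hne
    have hbd : BddBelow (Y ∩ Set.Ici t) := ⟨t, fun y hy => hy.2⟩
    have hmem := (hYc.inter isClosed_Ici).csInf_mem hne hbd
    exact ⟨_, hmem.1, hmem.2, fun y hy hyt => csInf_le hbd ⟨hy, hyt⟩⟩
  by_cases hl : (Y ∩ Set.Iic t).Nonempty
  · obtain ⟨α, hαY, hαt, hαmax⟩ := hα hl
    by_cases hr : (Y ∩ Set.Ici t).Nonempty
    · obtain ⟨β, hβY, hβt, hβmin⟩ := hβ hr
      -- `t = s β + (1 - s) α`, so the same combination of puts dominates by convexity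
      obtain ⟨s, r, hs, hr0, hsr, hst⟩ : ∃ s r : ℝ, 0 ≤ s ∧ 0 ≤ r ∧ s + r = 1 ∧
          s * β + r * α = t := by
        have : t ∈ segment ℝ β α := by
          rw [segment_symm, segment_eq_Icc (hαt.trans hβt)]; exact ⟨hαt, hβt⟩
        obtain ⟨s, r, hs, hr0, hsr, h⟩ := this
        exact ⟨s, r, hs, hr0, hsr, by simpa using h⟩
      have hint : ∀ ρ : Measure ℝ, FiniteFirstMoment ρ →
          ∫ y, (s * max (β - y) 0 + r * max (α - y) 0) ∂ρ = s * put ρ β + r * put ρ α := by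
        intro ρ hρ
        rw [integral_add ((integrable_put hρ β).const_mul s) ((integrable_put hρ α).const_mul r),
          integral_const_mul, integral_const_mul]
        rfl
      refine put_le_of_dominating hν hadd hle hY
        (ψ := fun y => s * max (β - y) 0 + r * max (α - y) 0)
        (((integrable_put hν β).const_mul s).add ((integrable_put hν α).const_mul r)) ?_ ?_ ?_
      · intro y
        have b1 := mul_le_mul_of_nonneg_left (le_max_left (β - y) 0) hs
        have b2 := mul_le_mul_of_nonneg_left (le_max_left (α - y) 0) hr0
        have b3 := mul_nonneg hs (le_max_right (β - y) 0)
        have b4 := mul_nonneg hr0 (le_max_right (α - y) 0)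
        have b5 : s * (β - y) + r * (α - y) = t - y := by linear_combination hst - y * hsr
        exact max_le (by linarith) (by linarith)
      · intro y hy
        rcases le_total y t with h | h
        · have := hαmax y hy h
          rw [max_eq_left (by linarith), max_eq_left (by linarith), max_eq_left (by linarith)]
          linear_combination hst - y * hsr
        · have := hβmin y hy h
          rw [max_eq_right (by linarith), max_eq_right (by linarith), max_eq_right (by linarith)]
          ring
      · rw [hint θ hθ, hint θ' hθ']
        exact add_le_add (mul_le_mul_of_nonneg_left (hput β hβY) hs)
          (mul_le_mul_of_nonneg_left (hput α hαY) hr0)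
    -- all of `Y` lies to the left of `t`
    · have hYt : ∀ y ∈ Y, y < t := fun y hy => by
        by_contra! h; exact hr ⟨y, hy, h⟩
      have hint : ∀ ρ : Measure ℝ, FiniteFirstMoment ρ →
          ∫ y, (max (α - y) 0 + (t - α)) ∂ρ = put ρ α + (ρ Set.univ).toReal * (t - α) := by
        intro ρ hρ
        have := hρ.1
        rw [integral_add (integrable_put hρ α) (integrable_const _), integral_const]
        rfl
      refine put_le_of_dominating hν hadd hle hY (ψ := fun y => max (α - y) 0 + (t - α))
        ((integrable_put hν α).add (integrable_const _)) ?_ ?_ ?_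
      · intro y
        exact max_le (by linarith [le_max_left (α - y) 0]) (by linarith [le_max_right (α - y) 0])
      · intro y hy
        have h := hYt y hy
        have := hαmax y hy h.le
        rw [max_eq_left (by linarith), max_eq_left (by linarith)]
        ring
      · rw [hint θ hθ, hint θ' hθ', hmass]
        linarith [hput α hαY]
  -- all of `Y` lies to the right of `t`
  · have hYt : ∀ y ∈ Y, t < y := fun y hy => by
      by_contra! h; exact hl ⟨y, hy, h⟩
    obtain ⟨y₀, hy₀⟩ := hYne
    obtain ⟨β, hβY, hβt, hβmin⟩ := hβ ⟨y₀, hy₀, (hYt y₀ hy₀).le⟩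
    refine put_le_of_dominating hν hadd hle hY (ψ := fun y => max (β - y) 0)
      (integrable_put hν β) ?_ ?_ (hput β hβY)
    · intro y
      exact max_le_max (by linarith) le_rfl
    · intro y hy
      have h := hYt y hy
      have := hβmin y hy h.le
      rw [max_eq_right (by linarith), max_eq_right (by linarith)]

/-- Theorem 6.1(i). If `(Γ,M)` is nondegenerate, first-order
right-monotone and second-order left-monotone, and `P ∈ S(μ,ν)` is concentrated on `Γ`
with `P|_{M×ℝ}` a martingale, then `P` is the Increasing Supermartingale Transport:
for every `x`, the second marginal of `P|_{(-∞,x]×ℝ}` is the shadow of `μ|_{(-∞,x]}` in `ν`. -/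
theorem geometric_characterization_increasing
    (μ ν : Measure ℝ) (hμp : IsProbabilityMeasure μ) (hνp : IsProbabilityMeasure ν)
    (hμ : FiniteFirstMoment μ) (hν : FiniteFirstMoment ν) (h : CDOrder μ ν)
    (Γ : Set (ℝ × ℝ)) (M : Set ℝ) (hΓ : MeasurableSet Γ) (hM : MeasurableSet M)
    (hnd : Nondegenerate Γ M)
    (h1 : FirstOrderRightMonotone Γ M) (h2 : SecondOrderLeftMonotone Γ)
    (P : Measure (ℝ × ℝ)) (hP : IsSupermartingaleCoupling P μ ν)
    (hPΓ : P Γᶜ = 0) (hPM : MartingaleOn P M) :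
    ∀ x : ℝ, IsShadow (μ.restrict (Set.Iic x)) ν
      ((P.restrict (Set.Iic x ×ˢ (Set.univ : Set ℝ))).map Prod.snd) := by
  intro x
  change IsShadow (μ.restrict (Set.Iic x)) ν (sndOn P (Set.Iic x))
  have hA : MeasurableSet (Set.Iic x) := measurableSet_Iic
  have hμx : FiniteFirstMoment (μ.restrict (Set.Iic x)) := hμ.mono Measure.restrict_le_self
  have hθν := sndOn_le hP.1 hA
  have hθ := hν.mono hθν
  have := hμx.1
  have := hθ.1
  refine ⟨hθ, cdOrder_of_put hμx hθ (sndOn_mass hP.1 hA)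
    (put_le_put_sndOn hP hμ hν hA), hθν, ?_⟩
  intro θ' hθ' hcd hle
  have := hθ'.1
  have hadd := sndOn_add_compl hP.1 hA
  have hmass : sndOn P (Set.Iic x) Set.univ = θ' Set.univ :=
    (sndOn_mass hP.1 hA).symm.trans hcd.mass_eq
  have hY := sndOn_compl_laterTargets hPΓ x
  rcases (laterTargets Γ x).eq_empty_or_nonempty with hem | hne
  -- no mass is transported from the right of `x`, so both measures equal `ν`
  · have h0 : sndOn P (Set.Iic x)ᶜ = 0 := by
      rw [hem] at hY
      simpa using hY
    rw [h0, add_zero] at hadd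
    have : θ' = ν := Measure.eq_of_le_of_measure_univ_eq hle (by rw [← hmass, hadd])
    rw [hadd, this]
    exact fun φ _ _ _ => le_rfl
  · refine cdOrder_of_put hθ hθ' hmass
      (put_le_of_put_le_on hν hadd hle hmass isClosed_closure hne hY ?_)
    intro b hb
    rw [put_eq_of_mem hP.1 hμ hν hM hnd h1 h2 hPΓ hPM hb]
    exact hcd.put_le b
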